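/- Let A be a unital C*-algebra over ℂ. Suppose (m_j) and (n_j) are sequences of positive integers with m_j ∣ m_{j+1} and n_j ∣ n_{j+1} for all j, and suppose φ_j : M_{m_j}(ℂ) → A and ψ_j : M_{n_j}(ℂ) → A are injective unital *-algebra homomorphisms satisfying the compatibility conditions φ_j = φ_{j+1} ∘ E_{m_j, m_{j+1}} and ψ_j = ψ_{j+1} ∘ E_{n_j, n_{j+1}}, such that ⋃_j range(φ_j) and ⋃_j range(ψ_j) are both dense in A. Then there exist strictly increasing sequences (k_j) and (ℓ_j) of natural numbers with m_{k_j} ∣ n_{ℓ_j} and n_{ℓ_j} ∣ m_{k_{j+1}} for all j, and a *-algebra automorphism γ of A (a StarAlgEquiv from A to A over ℂ) such that γ ∘ φ_{k_j} = ψ_{ℓ_j} ∘ E_{m_{k_j}, n_{ℓ_j}} for every j. -/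

import Mathlib

/-- The canonical embedding `E_{m,n} : M_m(ℂ) → M_n(ℂ)` (for `m ∣ n`), sending a matrix `B` to
the block-diagonal matrix consisting of `n/m` copies of `B` along the diagonal, written
entrywise via the identification `i ↦ (i / m, i % m)` of `Fin n` with `Fin (n/m) × Fin m`. -/
def canonicalMatrixEmbedding (m n : ℕ) (hm : 0 < m) :
    Matrix (Fin m) (Fin m) ℂ → Matrix (Fin n) (Fin n) ℂ :=
  fun B i j =>
    if (i : ℕ) / m = (j : ℕ) / m then
      B ⟨(i : ℕ) % m, Nat.mod_lt _ hm⟩ ⟨(j : ℕ) % m, Nat.mod_lt _ hm⟩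
    else 0

/-!
A UHF algebra carries a trace extending the normalized traces of its matrix subalgebras. If
`M_m(ℂ)` embeds unitally, the trace of a minimal projection `e` of `M_m(ℂ)` is `1 / m`. On the
other hand `e` is close to, hence similar to, a projection of some `M_{n_l}(ℂ)`, whose trace is an
integer multiple of `1 / n_l`; so `m ∣ n_l`. Two towers with dense union therefore divide each
other alternately along subsequences. All the maps `φ_{k_j}` and `ψ_{l_j} ∘ E` are isometric, and
they are compatible because canonical embeddings compose, so `φ_{k_j} B ↦ ψ_{l_j} (E B)` is an
isometric *-homomorphism between dense *-subalgebras and extends to an automorphism.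
-/

theorem exists_strictMono_interleaving {r s : ℕ → ℕ → Prop} (hr : ∀ i, ∃ j > i, r i j)
    (hs : ∀ j, ∃ i > j, s j i) :
    ∃ k l : ℕ → ℕ, StrictMono k ∧ StrictMono l ∧
      (∀ j, r (k j) (l j)) ∧ ∀ j, s (l j) (k (j + 1)) := by
  choose F hF hrF using hr
  choose G hG hsG using hs
  let k : ℕ → ℕ := fun j => (G ∘ F)^[j] 0
  have hk (j : ℕ) : k (j + 1) = G (F (k j)) := Function.iterate_succ_apply' _ _ _
  have hGF (j : ℕ) : F (k j) < k (j + 1) := hk j ▸ hG _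
  exact ⟨k, F ∘ k, strictMono_nat_of_lt_succ fun j => (hF _).trans (hGF j),
    strictMono_nat_of_lt_succ fun j => (hGF j).trans (hF _), fun j => hrF _,
    fun j => hk j ▸ hsG _⟩

section Extension

variable {ι : Type*} [Preorder ι] [IsDirectedOrder ι]

theorem forall₂_of_dense_iUnion_of_monotone {X : Type*} [TopologicalSpace X] {s : ι → Set X}
    (hs : Monotone s) (hd : Dense (⋃ i, s i)) {P : X → X → Prop}
    (hP : IsClosed {p : X × X | P p.1 p.2}) (h : ∀ i, ∀ x ∈ s i, ∀ y ∈ s i, P x y) (x y : X) :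
    P x y := by
  suffices hsub : (⋃ i, s i) ×ˢ (⋃ i, s i) ⊆ {p : X × X | P p.1 p.2} from
    closure_minimal hsub hP ((hd.prod hd) (x, y))
  rintro ⟨x, y⟩ ⟨hx, hy⟩
  obtain ⟨i, hx⟩ := Set.mem_iUnion.mp hx
  obtain ⟨j, hy⟩ := Set.mem_iUnion.mp hy
  obtain ⟨k, hik, hjk⟩ := exists_ge_ge i j
  exact h k x (hs hik hx) y (hs hjk hy)

theorem exists_continuousLinearMap_of_compatible {𝕜 V W : Type*} {E : ι → Type*} [Nonempty ι]
    [NormedField 𝕜] [SeminormedAddCommGroup V] [NormedSpace 𝕜 V] [NormedAddCommGroup W]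
    [NormedSpace 𝕜 W] [CompleteSpace W] [∀ i, AddCommGroup (E i)] [∀ i, Module 𝕜 (E i)]
    (f : ∀ i, E i →ₗ[𝕜] V) (g : ∀ i, E i →ₗ[𝕜] W)
    (hfg : ∀ i j, i ≤ j → ∀ x, ∃ y, f i x = f j y ∧ g i x = g j y)
    (hf : Dense (⋃ i, Set.range (f i))) {C : ℝ} (hC : ∀ i x, ‖g i x‖ ≤ C * ‖f i x‖) :
    ∃ T : V →L[𝕜] W, ∀ i x, T (f i x) = g i x := by
  -- The joint graphs of `f i` and `g i` increase to the graph of a densely defined bounded map.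
  let Γ : ι → Submodule 𝕜 (V × W) := fun i => LinearMap.range ((f i).prod (g i))
  have hΓ : Monotone Γ := by
    rintro i j hij _ ⟨x, rfl⟩
    obtain ⟨y, hfy, hgy⟩ := hfg i j hij x
    exact ⟨y, Prod.ext hfy.symm hgy.symm⟩
  have mem_iSup (p : V × W) : p ∈ ⨆ i, Γ i ↔ ∃ i, p ∈ Γ i :=
    Submodule.mem_iSup_of_directed _ hΓ.directed_le
  have mem (i : ι) (x : E i) : (f i x, g i x) ∈ ⨆ i, Γ i := (mem_iSup _).2 ⟨i, x, rfl⟩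
  let fst : ↥(⨆ i, Γ i) →ₗ[𝕜] V := LinearMap.fst 𝕜 V W ∘ₗ Submodule.subtype _
  let snd : ↥(⨆ i, Γ i) →ₗ[𝕜] W := LinearMap.snd 𝕜 V W ∘ₗ Submodule.subtype _
  have dense_fst : DenseRange fst := hf.mono <| Set.iUnion_subset fun i => by
    rintro _ ⟨x, rfl⟩
    exact ⟨⟨_, mem i x⟩, rfl⟩
  have norm_snd_le (p : ↥(⨆ i, Γ i)) : ‖snd p‖ ≤ C * ‖fst p‖ := by
    obtain ⟨_, hp⟩ := p
    obtain ⟨i, x, rfl⟩ := (mem_iSup _).1 hp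
    exact hC i x
  exact ⟨snd.extendOfNorm fst, fun i x =>
    LinearMap.extendOfNorm_eq dense_fst ⟨C, norm_snd_le⟩ ⟨_, mem i x⟩⟩

variable {𝕜 A B : Type*} {E : ι → Type*} [Nonempty ι] [NormedField 𝕜]
  [NormedRing A] [NormedAlgebra 𝕜 A] [Star A] [ContinuousStar A]
  [NormedRing B] [NormedAlgebra 𝕜 B] [Star B] [ContinuousStar B] [CompleteSpace B]
  [∀ i, Ring (E i)] [∀ i, Algebra 𝕜 (E i)] [∀ i, Star (E i)]

theorem exists_starAlgHom_of_compatible (f : ∀ i, E i →⋆ₐ[𝕜] A) (g : ∀ i, E i →⋆ₐ[𝕜] B)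
    (hfg : ∀ i j, i ≤ j → ∀ x, ∃ y, f i x = f j y ∧ g i x = g j y)
    (hf : Dense (⋃ i, Set.range (f i))) {C : ℝ} (hC : ∀ i x, ‖g i x‖ ≤ C * ‖f i x‖) :
    ∃ γ : A →⋆ₐ[𝕜] B, Continuous γ ∧ ∀ i x, γ (f i x) = g i x := by
  obtain ⟨T, hT⟩ := exists_continuousLinearMap_of_compatible
    (fun i => (f i).toAlgHom.toLinearMap) (fun i => (g i).toAlgHom.toLinearMap) hfg hf hC
  replace hT (i : ι) (x : E i) : T (f i x) = g i x := hT i x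
  have range_mono : Monotone fun i => Set.range (f i) := by
    rintro i j hij _ ⟨x, rfl⟩
    obtain ⟨y, hy, -⟩ := hfg i j hij x
    exact ⟨y, hy.symm⟩
  have T_one : T 1 = 1 := by
    obtain ⟨i⟩ := ‹Nonempty ι›
    simpa using hT i 1
  have T_mul : ∀ a b, T (a * b) = T a * T b := by
    refine forall₂_of_dense_iUnion_of_monotone range_mono hf
      (isClosed_eq (by fun_prop) (by fun_prop)) ?_
    rintro i _ ⟨x, rfl⟩ _ ⟨y, rfl⟩
    simp only [← map_mul, hT]
  have T_star : ∀ a, T (star a) = star (T a) := by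
    refine congrFun (Continuous.ext_on hf (by fun_prop) (by fun_prop) fun a ha => ?_)
    obtain ⟨i, x, rfl⟩ := Set.mem_iUnion.mp ha
    simp only [← map_star, hT]
  exact ⟨{ AlgHom.ofLinearMap T.toLinearMap T_one T_mul with map_star' := T_star },
    T.continuous, hT⟩

theorem exists_starAlgEquiv_of_compatible [CompleteSpace A] (f : ∀ i, E i →⋆ₐ[𝕜] A)
    (g : ∀ i, E i →⋆ₐ[𝕜] B)
    (hfg : ∀ i j, i ≤ j → ∀ x, ∃ y, f i x = f j y ∧ g i x = g j y)
    (hf : Dense (⋃ i, Set.range (f i))) (hg : Dense (⋃ i, Set.range (g i)))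
    (hnorm : ∀ i x, ‖g i x‖ = ‖f i x‖) :
    ∃ γ : A ≃⋆ₐ[𝕜] B, ∀ i x, γ (f i x) = g i x := by
  obtain ⟨γ, hγ_cont, hγ⟩ := exists_starAlgHom_of_compatible f g hfg hf (C := 1) (by simp [hnorm])
  obtain ⟨δ, hδ_cont, hδ⟩ := exists_starAlgHom_of_compatible g f
    (fun i j hij x => (hfg i j hij x).imp fun _ => And.symm) hg (C := 1) (by simp [hnorm])
  have hδγ : δ ∘ γ = id := by
    refine Continuous.ext_on hf (by fun_prop) continuous_id fun a ha => ?_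
    obtain ⟨i, x, rfl⟩ := Set.mem_iUnion.mp ha
    simp [hγ, hδ]
  have hγδ : γ ∘ δ = id := by
    refine Continuous.ext_on hg (by fun_prop) continuous_id fun b hb => ?_
    obtain ⟨i, x, rfl⟩ := Set.mem_iUnion.mp hb
    simp [hγ, hδ]
  exact ⟨StarAlgEquiv.ofStarAlgHom γ δ (DFunLike.coe_injective hδγ) (DFunLike.coe_injective hγδ),
    hγ⟩

end Extension

theorem exists_semiconjBy_of_isUnit_one_sub_sq {R : Type*} [Ring R] {p q : R}
    (hp : IsIdempotentElem p) (hq : IsIdempotentElem q) (h : IsUnit (1 - (p - q) ^ 2)) :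
    ∃ u : Rˣ, SemiconjBy (u : R) q p := by
  -- Kato's intertwiner `p * q + (1 - p) * (1 - q)`, inverted by its mirror image up to a unit.
  have mul_eq {p q : R} (hp : IsIdempotentElem p) (hq : IsIdempotentElem q) :
      (p * q + (1 - p) * (1 - q)) * (q * p + (1 - q) * (1 - p)) = 1 - (p - q) ^ 2 := by
    have hpp : p * p = p := hp
    have hqq : q * q = q := hq
    have hqq' (a : R) : q * (q * a) = q * a := by rw [← mul_assoc, hqq]
    simp only [sq, mul_add, add_mul, mul_sub, sub_mul, mul_one, one_mul, mul_assoc, hpp, hqq, hqq']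
    abel
  have hcomm : Commute (p * q + (1 - p) * (1 - q)) (q * p + (1 - q) * (1 - p)) :=
    (mul_eq hp hq).trans <| by rw [mul_eq hq hp, ← neg_sub p q, neg_sq]
  have hs : IsUnit (p * q + (1 - p) * (1 - q)) :=
    (hcomm.isUnit_mul_iff.mp (mul_eq hp hq ▸ h)).1
  refine ⟨hs.unit, ?_⟩
  calc (p * q + (1 - p) * (1 - q)) * q = p * q := by
        rw [add_mul, mul_assoc, mul_assoc, hq.eq, hq.one_sub_mul_self, mul_zero, add_zero]
    _ = p * (p * q + (1 - p) * (1 - q)) := by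
        rw [mul_add, ← mul_assoc, ← mul_assoc, hp.eq, hp.mul_one_sub_self, zero_mul, add_zero]

theorem exists_semiconjBy_of_norm_sub_lt_one {R : Type*} [NormedRing R] [HasSummableGeomSeries R]
    {p q : R} (hp : IsIdempotentElem p) (hq : IsIdempotentElem q) (h : ‖p - q‖ < 1) :
    ∃ u : Rˣ, SemiconjBy (u : R) q p := by
  refine exists_semiconjBy_of_isUnit_one_sub_sq hp hq (isUnit_one_sub_of_norm_lt_one ?_)
  calc ‖(p - q) ^ 2‖ ≤ ‖p - q‖ ^ 2 := norm_pow_le' _ two_pos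
    _ < 1 := pow_lt_one₀ (norm_nonneg _) h two_ne_zero

theorem apply_eq_of_semiconjBy {M N : Type*} [Monoid M] {f : M → N}
    (hf : ∀ a b, f (a * b) = f (b * a)) {u : Mˣ} {a b : M} (h : SemiconjBy (u : M) a b) :
    f a = f b := by
  calc f a = f (↑u⁻¹ * (u * a)) := by rw [Units.inv_mul_cancel_left]
    _ = f (b * u * ↑u⁻¹) := by rw [hf, h.eq]
    _ = f b := by rw [Units.mul_inv_cancel_right]

section CStarAlgebra

open ComplexStarModule

variable {A : Type*} [CStarAlgebra A]

theorem exists_isStarProjection_norm_sub_le {x : A} (hx : IsSelfAdjoint x) {δ : ℝ}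
    (hδ : δ < 1 / 4) (h : ‖x * x - x‖ ≤ δ) : ∃ p, IsStarProjection p ∧ ‖p - x‖ ≤ 2 * δ := by
  have sq_sub_self : x * x - x = cfc (fun t : ℝ => t * t - t) x := by
    rw [cfc_sub (fun t : ℝ => t * t) (fun t => t) x, cfc_mul (fun t : ℝ => t) (fun t => t) x,
      cfc_id' ℝ x]
  have spectrum_bound : ∀ t ∈ spectrum ℝ x, |t * t - t| ≤ δ := fun t ht =>
    (norm_apply_le_norm_cfc (fun t : ℝ => t * t - t) x ht).trans (sq_sub_self ▸ h)
  have half_notMem : 1 / 2 ∉ spectrum ℝ x := fun hmem => by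
    have h_le : |(1 / 2 * (1 / 2) - 1 / 2 : ℝ)| ≤ δ := spectrum_bound _ hmem
    norm_num [abs_of_neg] at h_le
    linarith
  let χ : ℝ → ℝ := (Set.Ioi (1 / 2)).indicator fun _ => 1
  have χ_cont : ContinuousOn χ (spectrum ℝ x) := fun t ht =>
    (continuousOn_const.continuousAt_indicator <| by
      rw [frontier_Ioi]
      exact ne_of_mem_of_not_mem ht half_notMem).continuousWithinAt
  refine ⟨cfc χ x, ⟨?_, cfc_predicate χ x⟩, ?_⟩
  · rw [IsIdempotentElem, ← cfc_mul χ χ x]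
    congr 1
    ext t
    simp only [χ, Set.indicator_apply]
    split_ifs <;> simp
  · have χ_sub : cfc χ x - x = cfc (fun t => χ t - t) x := by
      rw [cfc_sub χ (fun t => t) x, cfc_id' ℝ x]
    have hδ₀ : 0 ≤ δ := (norm_nonneg _).trans h
    rw [χ_sub]
    refine norm_cfc_le (by positivity) fun t ht => ?_
    have ht' := abs_le.mp (spectrum_bound t ht)
    rw [Real.norm_eq_abs, abs_le]
    simp only [χ, Set.indicator_apply, Set.mem_Ioi]
    split_ifs with hlt <;> constructor <;> nlinarith

theorem norm_mul_self_sub_self_le_of_isStarProjection {e : A} (he : IsStarProjection e) (y : A) :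
    ‖y * y - y‖ ≤ (2 + ‖y - e‖) * ‖y - e‖ := by
  have key : y * y - y = (y - e) * y - (1 - e) * (y - e) := by
    simp only [mul_sub, sub_mul, one_mul, he.isIdempotentElem.eq]
    abel
  have norm_y_le : ‖y‖ ≤ 1 + ‖y - e‖ :=
    (norm_le_insert' y e).trans (add_le_add_left he.norm_le _)
  calc ‖y * y - y‖ ≤ ‖y - e‖ * ‖y‖ + ‖1 - e‖ * ‖y - e‖ := by
        rw [key]
        exact (norm_sub_le _ _).trans (add_le_add (norm_mul_le _ _) (norm_mul_le _ _))
    _ ≤ ‖y - e‖ * (1 + ‖y - e‖) + 1 * ‖y - e‖ := by gcongr; exact he.one_sub.norm_le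
    _ = (2 + ‖y - e‖) * ‖y - e‖ := by ring

theorem exists_isStarProjection_norm_map_sub_lt_one {B : Type*} [CStarAlgebra B]
    (ψ : B →⋆ₐ[ℂ] A) (hψ : Function.Injective ψ) {e : A} (he : IsStarProjection e) {x : B}
    (hx : ‖ψ x - e‖ ≤ 1 / 10) : ∃ p, IsStarProjection p ∧ ‖ψ p - e‖ < 1 := by
  -- `c = 1 / 10` is small enough for `(2 + c) * c < 1 / 4` and `2 * ((2 + c) * c) + c < 1`.
  have norm_ψ (b : B) : ‖ψ b‖ = ‖b‖ := NonUnitalStarAlgHom.norm_map ψ hψ b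
  let y : B := ℜ x
  have hy : ‖ψ y - e‖ ≤ 1 / 10 := calc
    ‖ψ y - e‖ = ‖ℜ (ψ x - e)‖ := by
      rw [map_sub, AddSubgroup.coe_norm, AddSubgroup.coe_sub, he.isSelfAdjoint.coe_realPart,
        ← map_realPart]
    _ ≤ 1 / 10 := (realPart.norm_le _).trans hx
  have hyy : ‖y * y - y‖ ≤ 21 / 100 := calc
    ‖y * y - y‖ = ‖ψ y * ψ y - ψ y‖ := by rw [← norm_ψ, map_sub, map_mul]
    _ ≤ (2 + ‖ψ y - e‖) * ‖ψ y - e‖ := norm_mul_self_sub_self_le_of_isStarProjection he _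
    _ ≤ (2 + 1 / 10) * (1 / 10) := by gcongr
    _ = 21 / 100 := by norm_num
  obtain ⟨p, hp, hpy⟩ := exists_isStarProjection_norm_sub_le (ℜ x).2 (by norm_num) hyy
  refine ⟨p, hp, ?_⟩
  calc ‖ψ p - e‖ ≤ ‖ψ p - ψ y‖ + ‖ψ y - e‖ := norm_sub_le_norm_sub_add_norm_sub ..
    _ ≤ 2 * (21 / 100) + 1 / 10 := add_le_add (by rwa [← map_sub, norm_ψ]) hy
    _ < 1 := by norm_num

end CStarAlgebra

section Matrix

theorem trace_eq_rank_of_isIdempotentElem {K n : Type*} [Field K] [Fintype n]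
    {P : Matrix n n K} (hP : IsIdempotentElem P) : P.trace = P.rank := by
  classical
  have hP' : IsIdempotentElem (Matrix.toLin' P) := hP.map (Matrix.toLinAlgEquiv' (R := K) (n := n))
  rw [← Matrix.trace_toLin'_eq, (LinearMap.IsIdempotentElem.isProj_range _ hP').trace]
  rfl

theorem isStarProjection_single_one {R n : Type*} [Semiring R] [StarRing R] [Fintype n]
    [DecidableEq n] (i : n) : IsStarProjection (Matrix.single i i (1 : R)) :=
  ⟨by simp [IsIdempotentElem], by simp [IsSelfAdjoint, Matrix.star_eq_conjTranspose]⟩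

theorem card_nsmul_apply_single_of_tracial {R n M : Type*} [Semiring R] [Fintype n]
    [DecidableEq n] [AddCommMonoid M] (f : Matrix n n R →+ M)
    (hf : ∀ a b, f (a * b) = f (b * a)) (i : n) :
    Fintype.card n • f (Matrix.single i i 1) = f 1 := by
  have apply_single (j : n) : f (Matrix.single j j 1) = f (Matrix.single i i 1) := by
    simpa using hf (Matrix.single j i 1) (Matrix.single i j 1)
  rw [← Matrix.sum_single_one, map_sum, Finset.sum_congr rfl fun j _ => apply_single j]
  simp

open scoped Matrix.Norms.L2Operator

variable {𝕜 m n : Type*} [RCLike 𝕜] [Fintype m] [Fintype n] [DecidableEq n]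

theorem norm_entry_le_l2_opNorm (B : Matrix m n 𝕜) (i : m) (j : n) : ‖B i j‖ ≤ ‖B‖ := by
  calc ‖B i j‖ ≤ ‖WithLp.toLp 2 (B.mulVec (Pi.single j 1))‖ := by
        simpa using PiLp.norm_apply_le (WithLp.toLp 2 (B.mulVec (Pi.single j 1))) i
    _ ≤ ‖B‖ := by simpa using Matrix.l2_opNorm_mulVec B (EuclideanSpace.single j 1)

theorem norm_trace_le_card_mul_l2_opNorm (B : Matrix n n 𝕜) :
    ‖B.trace‖ ≤ Fintype.card n * ‖B‖ := by
  calc ‖B.trace‖ ≤ ∑ i, ‖B i i‖ := norm_sum_le _ _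
    _ ≤ ∑ _i : n, ‖B‖ := Finset.sum_le_sum fun i _ => norm_entry_le_l2_opNorm B i i
    _ = Fintype.card n * ‖B‖ := by simp

end Matrix

section NormalizedTrace

variable {𝕜 n : Type*} [RCLike 𝕜] [Fintype n]

variable (𝕜 n) in
/-- The normalized trace `tr B = Tr B / |n|` on `M_n(𝕜)`, the tracial state of a matrix algebra. -/
noncomputable def normalizedTrace : Matrix n n 𝕜 →ₗ[𝕜] 𝕜 :=
  (Fintype.card n : 𝕜)⁻¹ • Matrix.traceLinearMap n 𝕜 𝕜

theorem normalizedTrace_apply (B : Matrix n n 𝕜) :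
    normalizedTrace 𝕜 n B = B.trace / Fintype.card n := by
  simp [normalizedTrace, div_eq_inv_mul]

theorem normalizedTrace_one [DecidableEq n] [Nonempty n] : normalizedTrace 𝕜 n 1 = 1 := by
  simp [normalizedTrace_apply]

theorem normalizedTrace_mul_comm (B C : Matrix n n 𝕜) :
    normalizedTrace 𝕜 n (B * C) = normalizedTrace 𝕜 n (C * B) := by
  simp only [normalizedTrace_apply, Matrix.trace_mul_comm B C]

open scoped Matrix.Norms.L2Operator in
theorem norm_normalizedTrace_le [DecidableEq n] (B : Matrix n n 𝕜) :
    ‖normalizedTrace 𝕜 n B‖ ≤ ‖B‖ := by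
  rw [normalizedTrace_apply, norm_div, RCLike.norm_natCast]
  exact div_le_of_le_mul₀ (by positivity) (by positivity)
    ((norm_trace_le_card_mul_l2_opNorm B).trans_eq (mul_comm _ _))

theorem normalizedTrace_reindex {m : Type*} [Fintype m] (e : m ≃ n) (B : Matrix m m 𝕜) :
    normalizedTrace 𝕜 n (Matrix.reindex e e B) = normalizedTrace 𝕜 m B := by
  rw [normalizedTrace_apply, normalizedTrace_apply, Fintype.card_congr e]
  exact congrArg (· / _) (Equiv.sum_comp e.symm fun i => B i i)

open scoped Kronecker in
theorem normalizedTrace_one_kronecker {m : Type*} [Fintype m] [DecidableEq n] [Nonempty n]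
    (B : Matrix m m 𝕜) :
    normalizedTrace 𝕜 (n × m) ((1 : Matrix n n 𝕜) ⊗ₖ B) = normalizedTrace 𝕜 m B := by
  simp [normalizedTrace_apply, Matrix.trace_kronecker, mul_div_mul_left]

end NormalizedTrace

section CanonicalEmbedding

open scoped Kronecker

variable {m n : ℕ} (hm : 0 < m)

theorem canonicalMatrixEmbedding_self (B : Matrix (Fin m) (Fin m) ℂ) :
    canonicalMatrixEmbedding m m hm B = B := by
  ext i j
  simp [canonicalMatrixEmbedding, Nat.mod_eq_of_lt, Nat.div_eq_of_lt]

theorem canonicalMatrixEmbedding_comp {p : ℕ} (hn : 0 < n) (h : m ∣ n)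
    (B : Matrix (Fin m) (Fin m) ℂ) :
    canonicalMatrixEmbedding n p hn (canonicalMatrixEmbedding m n hm B) =
      canonicalMatrixEmbedding m p hm B := by
  obtain ⟨q, rfl⟩ := h
  ext i j
  have block_iff : (i : ℕ) / m = j / m ↔ (i : ℕ) / m / q = j / m / q ∧ i / m % q = j / m % q :=
    ⟨fun h => by simp [h], fun ⟨hdiv, hmod⟩ => by
      rw [← Nat.div_add_mod (i / m) q, ← Nat.div_add_mod (j / m) q, hdiv, hmod]⟩
  simp only [canonicalMatrixEmbedding, Nat.mod_mul_right_div_self, Nat.mod_mul_right_mod,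
    ← Nat.div_div_eq_div_mul, block_iff, ite_and]

theorem canonicalMatrixEmbedding_eq_reindex_one_kronecker {q : ℕ} (B : Matrix (Fin m) (Fin m) ℂ) :
    canonicalMatrixEmbedding m (q * m) hm B =
      Matrix.reindex finProdFinEquiv finProdFinEquiv ((1 : Matrix (Fin q) (Fin q) ℂ) ⊗ₖ B) := by
  ext i j
  simp [canonicalMatrixEmbedding, Matrix.one_apply, Fin.ext_iff, Fin.divNat, Fin.modNat]

theorem normalizedTrace_canonicalMatrixEmbedding (hn : 0 < n) (h : m ∣ n)
    (B : Matrix (Fin m) (Fin m) ℂ) :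
    normalizedTrace ℂ (Fin n) (canonicalMatrixEmbedding m n hm B) =
      normalizedTrace ℂ (Fin m) B := by
  obtain ⟨q, rfl⟩ := exists_eq_mul_left_of_dvd h
  have : Nonempty (Fin q) := Fin.pos_iff_nonempty.mp (Nat.pos_of_mul_pos_right hn)
  rw [canonicalMatrixEmbedding_eq_reindex_one_kronecker, normalizedTrace_reindex,
    normalizedTrace_one_kronecker]

/-- The canonical embedding `E_{m,n}` as a unital *-homomorphism, which it is when `m ∣ n`. -/
noncomputable def canonicalMatrixEmbeddingHom (h : m ∣ n) :
    Matrix (Fin m) (Fin m) ℂ →⋆ₐ[ℂ] Matrix (Fin n) (Fin n) ℂ where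
  toFun := canonicalMatrixEmbedding m n hm
  map_one' := by
    obtain ⟨q, rfl⟩ := exists_eq_mul_left_of_dvd h
    simp [canonicalMatrixEmbedding_eq_reindex_one_kronecker]
  map_mul' B C := by
    obtain ⟨q, rfl⟩ := exists_eq_mul_left_of_dvd h
    simp only [canonicalMatrixEmbedding_eq_reindex_one_kronecker, Matrix.reindex_apply,
      Matrix.submatrix_mul_equiv, ← Matrix.mul_kronecker_mul, one_mul]
  map_zero' := by
    ext
    simp [canonicalMatrixEmbedding]
  map_add' B C := by
    ext
    simp only [canonicalMatrixEmbedding, Matrix.add_apply]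
    split_ifs <;> simp
  commutes' c := by
    obtain ⟨q, rfl⟩ := exists_eq_mul_left_of_dvd h
    simp [canonicalMatrixEmbedding_eq_reindex_one_kronecker, Algebra.algebraMap_eq_smul_one,
      Matrix.kronecker_smul, Matrix.submatrix_smul]
  map_star' B := by
    ext
    simp [canonicalMatrixEmbedding, Matrix.star_apply, apply_ite star, eq_comm]

theorem canonicalMatrixEmbeddingHom_apply (h : m ∣ n) (B : Matrix (Fin m) (Fin m) ℂ) :
    canonicalMatrixEmbeddingHom hm h B = canonicalMatrixEmbedding m n hm B := rfl

theorem canonicalMatrixEmbeddingHom_injective (hn : 0 < n) (h : m ∣ n) :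
    Function.Injective (canonicalMatrixEmbeddingHom hm h) := by
  have : NeZero m := ⟨hm.ne'⟩
  have : NeZero n := ⟨hn.ne'⟩
  exact RingHom.injective (canonicalMatrixEmbeddingHom hm h).toAlgHom.toRingHom

end CanonicalEmbedding

/-- A presentation of a unital C*-algebra `A` as a UHF algebra: a tower of full matrix algebras
`M_{size j}(ℂ)`, linked by the canonical embeddings and represented faithfully in `A` with dense
union. -/
structure UHFPresentation (A : Type*) [CStarAlgebra A] where
  size : ℕ → ℕ
  size_pos : ∀ j, 0 < size j
  size_dvd_succ : ∀ j, size j ∣ size (j + 1)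
  hom : ∀ j, Matrix (Fin (size j)) (Fin (size j)) ℂ →⋆ₐ[ℂ] A
  hom_injective : ∀ j, Function.Injective (hom j)
  hom_eq_succ : ∀ j B,
    hom j B = hom (j + 1) (canonicalMatrixEmbedding (size j) (size (j + 1)) (size_pos j) B)
  dense_iUnion_range : Dense (⋃ j, Set.range (hom j))

namespace UHFPresentation

open scoped Matrix.Norms.L2Operator

variable {A : Type*} [CStarAlgebra A] (P : UHFPresentation A)

theorem size_dvd_of_le {i j : ℕ} (h : i ≤ j) : P.size i ∣ P.size j := by
  induction j, h using Nat.le_induction with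
  | base => exact dvd_rfl
  | succ j _ ih => exact ih.trans (P.size_dvd_succ j)

theorem hom_eq_of_le {i j : ℕ} (h : i ≤ j) (B : Matrix (Fin (P.size i)) (Fin (P.size i)) ℂ) :
    P.hom i B = P.hom j (canonicalMatrixEmbedding (P.size i) (P.size j) (P.size_pos i) B) := by
  induction j, h using Nat.le_induction with
  | base => rw [canonicalMatrixEmbedding_self]
  | succ j hij ih =>
    rw [ih, P.hom_eq_succ, canonicalMatrixEmbedding_comp _ _ (P.size_dvd_of_le hij)]

theorem monotone_range_hom : Monotone fun j => Set.range (P.hom j) := by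
  rintro i j hij _ ⟨B, rfl⟩
  exact ⟨_, (P.hom_eq_of_le hij B).symm⟩

theorem norm_hom (j : ℕ) (B : Matrix (Fin (P.size j)) (Fin (P.size j)) ℂ) :
    ‖P.hom j B‖ = ‖B‖ :=
  NonUnitalStarAlgHom.norm_map _ (P.hom_injective j) B

theorem exists_tracial_strongDual :
    ∃ τ : StrongDual ℂ A, (∀ a b, τ (a * b) = τ (b * a)) ∧
      ∀ j B, τ (P.hom j B) = normalizedTrace ℂ (Fin (P.size j)) B := by
  obtain ⟨τ, hτ⟩ := exists_continuousLinearMap_of_compatible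
    (fun j => (P.hom j).toAlgHom.toLinearMap) (fun j => normalizedTrace ℂ (Fin (P.size j)))
    (fun i j hij B => ⟨_, P.hom_eq_of_le hij B,
      (normalizedTrace_canonicalMatrixEmbedding _ (P.size_pos j) (P.size_dvd_of_le hij) B).symm⟩)
    P.dense_iUnion_range (C := 1)
    (fun j B => by simpa [P.norm_hom] using norm_normalizedTrace_le B)
  replace hτ (j : ℕ) (B : Matrix _ _ ℂ) :
    τ (P.hom j B) = normalizedTrace ℂ (Fin (P.size j)) B := hτ j B
  refine ⟨τ, forall₂_of_dense_iUnion_of_monotone P.monotone_range_hom P.dense_iUnion_range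
    (isClosed_eq (by fun_prop) (by fun_prop)) ?_, hτ⟩
  rintro j _ ⟨B, rfl⟩ _ ⟨C, rfl⟩
  rw [← map_mul, ← map_mul, hτ, hτ, normalizedTrace_mul_comm]

theorem exists_semiconjBy_hom {e : A} (he : IsStarProjection e) :
    ∃ j, ∃ p, IsStarProjection p ∧ ∃ u : Aˣ, SemiconjBy (u : A) e (P.hom j p) := by
  obtain ⟨_, hx, hxe⟩ := P.dense_iUnion_range.exists_dist_lt e (ε := 1 / 10) (by norm_num)
  obtain ⟨j, x, rfl⟩ := Set.mem_iUnion.mp hx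
  rw [dist_comm, dist_eq_norm] at hxe
  obtain ⟨p, hp, hpe⟩ :=
    exists_isStarProjection_norm_map_sub_lt_one (P.hom j) (P.hom_injective j) he hxe.le
  exact ⟨j, p, hp, exists_semiconjBy_of_norm_sub_lt_one (hp.map _).isIdempotentElem
    he.isIdempotentElem hpe⟩

theorem exists_dvd_size {m : ℕ} (hm : 0 < m) (φ : Matrix (Fin m) (Fin m) ℂ →⋆ₐ[ℂ] A) :
    ∃ j, m ∣ P.size j := by
  obtain ⟨τ, τ_comm, τ_hom⟩ := P.exists_tracial_strongDual
  let i : Fin m := ⟨0, hm⟩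
  let e : A := φ (Matrix.single i i 1)
  have he : IsStarProjection e := (isStarProjection_single_one i).map φ
  have τ_one : τ 1 = 1 := by
    have : Nonempty (Fin (P.size 0)) := Fin.pos_iff_nonempty.mp (P.size_pos 0)
    rw [← map_one (P.hom 0), τ_hom, normalizedTrace_one]
  have τ_e : m * τ e = 1 := by
    simpa [τ_one] using card_nsmul_apply_single_of_tracial
      ((τ : A →+ ℂ).comp (φ : Matrix (Fin m) (Fin m) ℂ →+ A)) (fun a b => by simp [τ_comm]) i
  obtain ⟨j, p, hp, u, hu⟩ := P.exists_semiconjBy_hom he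
  rw [apply_eq_of_semiconjBy τ_comm hu, τ_hom, normalizedTrace_apply, Fintype.card_fin,
    trace_eq_rank_of_isIdempotentElem hp.isIdempotentElem] at τ_e
  refine ⟨j, p.rank, ?_⟩
  have : (P.size j : ℂ) ≠ 0 := Nat.cast_ne_zero.mpr (P.size_pos j).ne'
  field_simp at τ_e
  exact_mod_cast τ_e.symm

theorem exists_gt_dvd_size {m : ℕ} (hm : 0 < m) (φ : Matrix (Fin m) (Fin m) ℂ →⋆ₐ[ℂ] A) (N : ℕ) :
    ∃ j > N, m ∣ P.size j := by
  obtain ⟨j, hj⟩ := P.exists_dvd_size hm φ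
  exact ⟨max j (N + 1), by simp, hj.trans (P.size_dvd_of_le (le_max_left _ _))⟩

theorem exists_starAlgEquiv_of_dvd {B : Type*} [CStarAlgebra B] (Q : UHFPresentation B)
    {k l : ℕ → ℕ} (hk : StrictMono k) (hl : StrictMono l)
    (hkl : ∀ j, P.size (k j) ∣ Q.size (l j)) (hlk : ∀ j, Q.size (l j) ∣ P.size (k (j + 1))) :
    ∃ γ : A ≃⋆ₐ[ℂ] B, ∀ j x, γ (P.hom (k j) x) =
      Q.hom (l j) (canonicalMatrixEmbedding (P.size (k j)) (Q.size (l j)) (P.size_pos _) x) := by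
  let ε (j : ℕ) := canonicalMatrixEmbeddingHom (P.size_pos (k j)) (hkl j)
  have ε_injective (j : ℕ) : Function.Injective (ε j) :=
    canonicalMatrixEmbeddingHom_injective _ (Q.size_pos _) _
  refine exists_starAlgEquiv_of_compatible (fun j => P.hom (k j))
    (fun j => (Q.hom (l j)).comp (ε j)) ?_ ?_ ?_ ?_
  · intro i j hij x
    refine ⟨_, P.hom_eq_of_le (hk.monotone hij) x, ?_⟩
    simp only [ε, StarAlgHom.comp_apply, canonicalMatrixEmbeddingHom_apply]
    rw [Q.hom_eq_of_le (hl.monotone hij), canonicalMatrixEmbedding_comp _ _ (hkl i),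
      canonicalMatrixEmbedding_comp _ _ (P.size_dvd_of_le (hk.monotone hij))]
  · exact P.dense_iUnion_range.mono <| Set.iUnion_subset fun i =>
      (P.monotone_range_hom hk.le_apply).trans
        (Set.subset_iUnion (fun j => Set.range (P.hom (k j))) i)
  · refine Q.dense_iUnion_range.mono (Set.iUnion_subset fun i => ?_)
    refine (Q.monotone_range_hom hl.le_apply).trans ?_
    rintro _ ⟨y, rfl⟩
    refine Set.mem_iUnion.mpr ⟨i + 1, canonicalMatrixEmbedding _ _ (Q.size_pos _) y, ?_⟩
    simp only [ε, StarAlgHom.comp_apply, canonicalMatrixEmbeddingHom_apply]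
    rw [Q.hom_eq_of_le (hl.monotone (Nat.le_succ i)), canonicalMatrixEmbedding_comp _ _ (hlk i)]
  · intro j x
    rw [StarAlgHom.comp_apply, Q.norm_hom, P.norm_hom]
    exact NonUnitalStarAlgHom.norm_map _ (ε_injective j) x

end UHFPresentation

/-- given two compatible unital matricial inductive systems with dense union in a
unital C*-algebra `A`, there are interleaving divisibility sequences and a *-automorphism `γ`
of `A` intertwining the two systems via the canonical embeddings.  (This is the key step in
the computable categoricity of UHF algebras.) -/
theorem uhf_intertwining_automorphism
    {A : Type*} [CStarAlgebra A]
    (m n : ℕ → ℕ) (hm : ∀ j, 0 < m j) (hn : ∀ j, 0 < n j)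
    (hmdvd : ∀ j, m j ∣ m (j + 1)) (hndvd : ∀ j, n j ∣ n (j + 1))
    (φ : ∀ j, Matrix (Fin (m j)) (Fin (m j)) ℂ →⋆ₐ[ℂ] A)
    (ψ : ∀ j, Matrix (Fin (n j)) (Fin (n j)) ℂ →⋆ₐ[ℂ] A)
    (hφinj : ∀ j, Function.Injective (φ j))
    (hψinj : ∀ j, Function.Injective (ψ j))
    (hφcompat : ∀ j B, φ j B = φ (j + 1) (canonicalMatrixEmbedding (m j) (m (j + 1)) (hm j) B))
    (hψcompat : ∀ j B, ψ j B = ψ (j + 1) (canonicalMatrixEmbedding (n j) (n (j + 1)) (hn j) B))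
    (hφdense : Dense (⋃ j, Set.range (φ j)))
    (hψdense : Dense (⋃ j, Set.range (ψ j))) :
    ∃ (k l : ℕ → ℕ), StrictMono k ∧ StrictMono l ∧
      (∀ j, m (k j) ∣ n (l j)) ∧ (∀ j, n (l j) ∣ m (k (j + 1))) ∧
      ∃ γ : A ≃⋆ₐ[ℂ] A,
        ∀ j B, γ (φ (k j) B) = ψ (l j) (canonicalMatrixEmbedding (m (k j)) (n (l j)) (hm (k j)) B) := by
  let P : UHFPresentation A := ⟨m, hm, hmdvd, φ, hφinj, hφcompat, hφdense⟩
  let Q : UHFPresentation A := ⟨n, hn, hndvd, ψ, hψinj, hψcompat, hψdense⟩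
  obtain ⟨k, l, hk, hl, hkl, hlk⟩ := exists_strictMono_interleaving
    (fun i => Q.exists_gt_dvd_size (hm i) (φ i) i) (fun j => P.exists_gt_dvd_size (hn j) (ψ j) j)
  exact ⟨k, l, hk, hl, hkl, hlk, P.exists_starAlgEquiv_of_dvd Q hk hl hkl hlk⟩
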